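/- Fix t > 0, ξ > 0, y₀ > 0, p > 1 and k > 0, and set η := 1/(2(p-1)). Let C(k,τ) be the call price in the CEV-variance model with exponent p, and suppose σ : (0, τ₀) → (0,∞) satisfies BS(k, σ(τ)², τ) = C(k,τ) for all τ ∈ (0,τ₀) (the implied volatility). Then lim_{τ→0⁺} σ(τ)²·2(2p-1)·τ·|log τ| / k² = 1; that is, σ(τ)² ∼ k²/(2(2p-1)·τ·|log τ|) as τ → 0⁺. -/

import Mathlib

/-- The standard normal cumulative distribution function. -/
noncomputable def Phi (x : ℝ) : ℝ :=
  ∫ s in Set.Iic x, Real.exp (-(s ^ 2) / 2) / Real.sqrt (2 * Real.pi)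

/-- The Black–Scholes call price. -/
noncomputable def BS (k w T : ℝ) : ℝ :=
  Phi (-k / Real.sqrt (w * T) + Real.sqrt (w * T) / 2)
    - Real.exp k * Phi (-k / Real.sqrt (w * T) - Real.sqrt (w * T) / 2)

/-- The modified Bessel function of the first kind of order `ν`. -/
noncomputable def besselI (ν x : ℝ) : ℝ :=
  ∑' m : ℕ, (x / 2) ^ (2 * (m : ℝ) + ν) / ((m.factorial : ℝ) * Real.Gamma ((m : ℝ) + ν + 1))

/-!
The price `BS k y τ` depends on `(y, τ)` only through the total variance `y * τ`, and the CEV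
density is asymptotic to `D * y ^ (-2 * p)` at infinity. Substituting `u = y * τ` therefore
gives, by dominated convergence, `C τ ~ const * τ ^ (2 * p - 1)` as `τ → 0⁺`. On the other hand
a small total variance `v` satisfies `log (BS k v 1) ~ -k ^ 2 / (2 * v)`. Comparing the two
logarithms at `v = σ τ ^ 2 * τ` yields the asymptotics of the implied variance.
-/

open Filter MeasureTheory ProbabilityTheory Real Set
open scoped Topology

section StandardNormal

lemma Phi_eq_setIntegral_gaussianPDFReal (x : ℝ) :
    Phi x = ∫ z in Iic x, gaussianPDFReal 0 1 z := by
  simp only [Phi, gaussianPDFReal, NNReal.coe_one, mul_one, sub_zero, div_eq_inv_mul]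

lemma Phi_eq_cdf_gaussianReal : Phi = cdf (gaussianReal 0 1) := by
  ext x
  rw [cdf_eq_real, Measure.real, gaussianReal_apply_eq_integral 0 one_ne_zero,
    ENNReal.toReal_ofReal (integral_nonneg fun z => gaussianPDFReal_nonneg 0 1 z),
    Phi_eq_setIntegral_gaussianPDFReal]

lemma Phi_nonneg (x : ℝ) : 0 ≤ Phi x := by
  rw [Phi_eq_cdf_gaussianReal]
  exact cdf_nonneg _ x

lemma monotone_Phi : Monotone Phi := by
  rw [Phi_eq_cdf_gaussianReal]
  exact monotone_cdf _

lemma Phi_le_exp {r : ℝ} (hr : 0 ≤ r) (x : ℝ) : Phi x ≤ exp (r * x + r ^ 2 / 2) := by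
  have h := measure_le_le_exp_mul_mgf (μ := gaussianReal 0 1) (X := id) x (neg_nonpos.2 hr)
    (integrable_exp_mul_gaussianReal _)
  rw [mgf_id_gaussianReal, ← exp_add] at h
  rw [Phi_eq_cdf_gaussianReal, cdf_eq_real]
  refine h.trans_eq ?_
  simp

lemma exists_mul_exp_le_Phi {b : ℝ} (hb : 1 / 2 < b) :
    ∃ c > 0, ∀ x, c * exp (-(b * x ^ 2)) ≤ Phi x := by
  obtain ⟨δ, hδ, rfl⟩ : ∃ δ > 0, b = 1 / 2 + δ := ⟨b - 1 / 2, sub_pos.2 hb, by ring⟩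
  refine ⟨(√(2 * π))⁻¹ * exp (-(1 / 2 + 1 / (4 * δ))), by positivity, fun x => ?_⟩
  have exponent_le : ∀ z ∈ Icc (x - 1) x,
      z ^ 2 / 2 ≤ 1 / 2 + 1 / (4 * δ) + (1 / 2 + δ) * x ^ 2 := by
    rintro z ⟨hz, hzx⟩
    have hsq : 0 ≤ (2 * δ * x + (x - z)) ^ 2 / (4 * δ) := by positivity
    have expand : (2 * δ * x + (x - z)) ^ 2 / (4 * δ)
        = δ * x ^ 2 + x * (x - z) + (x - z) ^ 2 * (1 / (4 * δ)) := by
      field_simp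
      ring
    have hu : (x - z) ^ 2 ≤ 1 := by nlinarith
    have := mul_le_mul_of_nonneg_right hu (by positivity : 0 ≤ 1 / (4 * δ))
    linarith
  calc (√(2 * π))⁻¹ * exp (-(1 / 2 + 1 / (4 * δ))) * exp (-((1 / 2 + δ) * x ^ 2))
      = ∫ _ in Icc (x - 1) x,
          (√(2 * π))⁻¹ * exp (-(1 / 2 + 1 / (4 * δ))) * exp (-((1 / 2 + δ) * x ^ 2)) := by simp
    _ ≤ ∫ z in Icc (x - 1) x, gaussianPDFReal 0 1 z := by
        refine setIntegral_mono_on (integrableOn_const (by simp))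
          (integrable_gaussianPDFReal 0 1).integrableOn measurableSet_Icc fun z hz => ?_
        rw [mul_assoc, ← exp_add]
        simp only [gaussianPDFReal, NNReal.coe_one, mul_one, sub_zero]
        gcongr
        linarith [exponent_le z hz]
    _ ≤ ∫ z in Iic x, gaussianPDFReal 0 1 z :=
        setIntegral_mono_set (integrable_gaussianPDFReal 0 1).integrableOn
          (ae_of_all _ fun z => gaussianPDFReal_nonneg 0 1 z) Icc_subset_Iic_self.eventuallyLE
    _ = Phi x := (Phi_eq_setIntegral_gaussianPDFReal x).symm

-- Completing the square: shifting a Gaussian amounts to an exponential tilt.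
lemma exp_mul_gaussianPDFReal_sub (s x z : ℝ) :
    exp (s ^ 2 / 2 - s * x) * gaussianPDFReal 0 1 (z - s)
      = gaussianPDFReal 0 1 z * exp (s * (z - x)) := by
  simp only [gaussianPDFReal, NNReal.coe_one, mul_one, sub_zero]
  rw [mul_left_comm, mul_assoc, ← exp_add, ← exp_add]
  ring_nf

lemma Phi_sub (x s : ℝ) : Phi (x - s) = ∫ z in Iic x, gaussianPDFReal 0 1 (z - s) := by
  rw [Phi_eq_setIntegral_gaussianPDFReal, ← (measurePreserving_sub_right volume
    s).setIntegral_preimage_emb (measurableEmbedding_subRight s)]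
  congr 2
  ext z
  simp

lemma Phi_sub_exp_mul_Phi_sub (s x : ℝ) :
    Phi x - exp (s ^ 2 / 2 - s * x) * Phi (x - s)
      = ∫ z in Iic x, gaussianPDFReal 0 1 z * (1 - exp (s * (z - x))) := by
  have hφ := integrable_gaussianPDFReal 0 1
  rw [Phi_sub, Phi_eq_setIntegral_gaussianPDFReal, ← integral_const_mul,
    ← integral_sub hφ.integrableOn ((hφ.comp_sub_right s).const_mul _).integrableOn]
  simp only [exp_mul_gaussianPDFReal_sub, mul_one_sub]

lemma one_sub_exp_mul_Phi_sub_le {s θ : ℝ} (hs : 0 ≤ s) (hθ : 0 ≤ θ) (x : ℝ) :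
    (1 - exp (-(s * θ))) * Phi (x - θ) ≤ Phi x - exp (s ^ 2 / 2 - s * x) * Phi (x - s) := by
  have hφ := integrable_gaussianPDFReal 0 1
  have hint : Integrable fun z => gaussianPDFReal 0 1 z * (1 - exp (s * (z - x))) := by
    simp only [mul_one_sub, ← exp_mul_gaussianPDFReal_sub]
    exact hφ.sub ((hφ.comp_sub_right s).const_mul _)
  rw [Phi_sub_exp_mul_Phi_sub, Phi_eq_setIntegral_gaussianPDFReal, ← integral_const_mul]
  calc ∫ z in Iic (x - θ), (1 - exp (-(s * θ))) * gaussianPDFReal 0 1 z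
      ≤ ∫ z in Iic (x - θ), gaussianPDFReal 0 1 z * (1 - exp (s * (z - x))) := by
        refine setIntegral_mono_on (hφ.const_mul _).integrableOn hint.integrableOn
          measurableSet_Iic fun z (hz : z ≤ x - θ) => ?_
        rw [mul_comm]
        gcongr
        · exact gaussianPDFReal_nonneg 0 1 z
        · nlinarith
    _ ≤ ∫ z in Iic x, gaussianPDFReal 0 1 z * (1 - exp (s * (z - x))) := by
        refine setIntegral_mono_set hint.integrableOn ?_
          (Iic_subset_Iic.2 (sub_le_self x hθ)).eventuallyLE
        filter_upwards [ae_restrict_mem measurableSet_Iic] with z hz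
        have : exp (s * (z - x)) ≤ 1 :=
          exp_le_one_iff.2 (mul_nonpos_of_nonneg_of_nonpos hs (sub_nonpos.2 hz))
        exact mul_nonneg (gaussianPDFReal_nonneg 0 1 z) (sub_nonneg.2 this)

end StandardNormal

section BlackScholes

variable {k w T : ℝ}

lemma BS_eq_BS_mul_one (k w T : ℝ) : BS k w T = BS k (w * T) 1 := by
  simp only [BS, mul_one]

lemma measurable_BS (k T : ℝ) : Measurable fun w => BS k w T := by
  have := monotone_Phi.measurable
  unfold BS
  fun_prop

lemma BS_le_exp (hk : 0 ≤ k) (hwT : 0 < w * T) :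
    BS k w T ≤ exp (k / 2 - k ^ 2 / 2 / (w * T)) := by
  set s := √(w * T) with hs
  have hs0 : 0 < s := sqrt_pos.2 hwT
  calc BS k w T ≤ Phi (-k / s + s / 2) :=
        sub_le_self _ (mul_nonneg (exp_pos k).le (Phi_nonneg _))
    _ ≤ exp (k / s * (-k / s + s / 2) + (k / s) ^ 2 / 2) := Phi_le_exp (by positivity) _
    _ = exp (k / 2 - k ^ 2 / 2 / (w * T)) := by
        rw [← sq_sqrt hwT.le, ← hs]
        congr 1
        field_simp
        ring

lemma exists_mul_exp_le_BS {a : ℝ} (ha : k ^ 2 / 2 < a) :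
    ∃ c > 0, ∀ w T, 0 < w * T → c * exp (-(a / (w * T))) ≤ BS k w T := by
  have ha0 : 0 < a := by nlinarith [sq_nonneg k]
  obtain ⟨k', hk', hk'a⟩ : ∃ k', max k 0 < k' ∧ k' < √(2 * a) :=
    exists_between (max_lt (lt_sqrt_of_sq_lt (by linarith)) (by positivity))
  obtain ⟨hkk', hk'0⟩ := max_lt_iff.1 hk'
  have hk'sq : k' ^ 2 < 2 * a := (lt_sqrt hk'0.le).1 hk'a
  obtain ⟨c, hc, hPhi⟩ := exists_mul_exp_le_Phi (b := a / k' ^ 2) (by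
    rw [div_lt_div_iff₀ two_pos (by positivity)]
    linarith)
  have hgap : 0 < 1 - exp (-(k' - k)) := sub_pos.2 (exp_lt_one_iff.2 (by linarith))
  refine ⟨(1 - exp (-(k' - k))) * c, by positivity, fun w T hwT => ?_⟩
  set s := √(w * T) with hs
  have hs0 : 0 < s := sqrt_pos.2 hwT
  have hBS := one_sub_exp_mul_Phi_sub_le hs0.le (θ := (k' - k) / s)
    (div_nonneg (by linarith) hs0.le) (-k / s + s / 2)
  have hlogMoneyness : s ^ 2 / 2 - s * (-k / s + s / 2) = k := by field_simp; ring
  have hd₂ : -k / s + s / 2 - s = -k / s - s / 2 := by ring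
  have hd : -k / s + s / 2 - (k' - k) / s = -k' / s + s / 2 := by ring
  rw [mul_div_cancel₀ _ hs0.ne', hlogMoneyness, hd₂, hd] at hBS
  calc (1 - exp (-(k' - k))) * c * exp (-(a / (w * T)))
      = (1 - exp (-(k' - k))) * (c * exp (-(a / k' ^ 2 * (-k' / s) ^ 2))) := by
        rw [← sq_sqrt hwT.le, ← hs, mul_assoc]
        congr 4
        field_simp
    _ ≤ (1 - exp (-(k' - k))) * Phi (-k' / s + s / 2) := by
        gcongr
        exact (hPhi _).trans (monotone_Phi (le_add_of_nonneg_right (by positivity)))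
    _ ≤ BS k w T := hBS

lemma BS_pos (hwT : 0 < w * T) : 0 < BS k w T := by
  obtain ⟨c, hc, hle⟩ := exists_mul_exp_le_BS (lt_add_one (k ^ 2 / 2))
  exact (by positivity : 0 < c * _).trans_le (hle w T hwT)

end BlackScholes

section TotalVariance

variable {ι : Type*} {l : Filter ι} {k : ℝ} {w T : ι → ℝ}

lemma tendsto_totalVariance_zero_of_tendsto_BS_zero (hpos : ∀ᶠ i in l, 0 < w i * T i)
    (hBS : Tendsto (fun i => BS k (w i) (T i)) l (𝓝 0)) :
    Tendsto (fun i => w i * T i) l (𝓝 0) := by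
  set a := k ^ 2 / 2 + 1
  have ha0 : 0 < a := by positivity
  obtain ⟨c, hc, hle⟩ := exists_mul_exp_le_BS (lt_add_one (k ^ 2 / 2))
  have hexp : Tendsto (fun i => c * exp (-(a / (w i * T i)))) l (𝓝 0) :=
    squeeze_zero' (Eventually.of_forall fun i => by positivity)
      (hpos.mono fun i hi => hle (w i) (T i) hi) hBS
  have hdiv : Tendsto (fun i => a / (w i * T i)) l atTop := by
    rw [← tendsto_neg_atBot_iff, ← tendsto_exp_comp_nhds_zero]
    simpa [hc.ne'] using hexp.const_mul c⁻¹
  simpa [mul_div_cancel₀ _ ha0.ne'] using hdiv.inv_tendsto_atTop.const_mul a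

lemma tendsto_totalVariance_mul_neg_log_BS (hk : 0 ≤ k) (hpos : ∀ᶠ i in l, 0 < w i * T i)
    (hvar : Tendsto (fun i => w i * T i) l (𝓝 0)) :
    Tendsto (fun i => w i * T i * -log (BS k (w i) (T i))) l (𝓝 (k ^ 2 / 2)) := by
  have hlim (A B : ℝ) : Tendsto (fun i => A - w i * T i * B) l (𝓝 A) := by
    simpa using (hvar.mul_const B).const_sub A
  refine tendsto_order.2 ⟨fun b hb => ?_, fun b hb => ?_⟩
  · filter_upwards [hpos, (hlim (k ^ 2 / 2) (k / 2)).eventually_const_lt hb] with i hi hbi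
    have hlog : log (BS k (w i) (T i)) ≤ k / 2 - k ^ 2 / 2 / (w i * T i) := by
      rw [log_le_iff_le_exp (BS_pos hi)]
      exact BS_le_exp hk hi
    calc b < k ^ 2 / 2 - w i * T i * (k / 2) := hbi
      _ = w i * T i * -(k / 2 - k ^ 2 / 2 / (w i * T i)) := by
          rw [neg_sub, mul_sub, mul_div_cancel₀ _ hi.ne']
      _ ≤ w i * T i * -log (BS k (w i) (T i)) := by gcongr
  · obtain ⟨a, hka, hab⟩ := exists_between hb
    obtain ⟨c, hc, hle⟩ := exists_mul_exp_le_BS hka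
    filter_upwards [hpos, (hlim a (log c)).eventually_lt_const hab] with i hi hbi
    have hlog : log c - a / (w i * T i) ≤ log (BS k (w i) (T i)) := by
      rw [le_log_iff_exp_le (BS_pos hi), sub_eq_add_neg, exp_add, exp_log hc]
      exact hle _ _ hi
    calc w i * T i * -log (BS k (w i) (T i)) ≤ w i * T i * -(log c - a / (w i * T i)) := by gcongr
      _ = a - w i * T i * log c := by rw [neg_sub, mul_sub, mul_div_cancel₀ _ hi.ne']
      _ < b := hbi

end TotalVariance

section BesselI

variable {ν : ℝ}

lemma factorial_mul_Gamma_le_Gamma (hν : 0 ≤ ν) (m : ℕ) :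
    (m.factorial : ℝ) * Gamma (ν + 1) ≤ Gamma (m + ν + 1) := by
  induction m with
  | zero => simp
  | succ n ih =>
    calc ((n + 1).factorial : ℝ) * Gamma (ν + 1)
        = (n + 1) * (n.factorial * Gamma (ν + 1)) := by
          rw [Nat.factorial_succ]; push_cast; ring
      _ ≤ (n + ν + 1) * Gamma (n + ν + 1) := by gcongr; linarith
      _ = Gamma ((n + 1 : ℕ) + ν + 1) := by
          rw [← Gamma_add_one (by positivity)]; push_cast; ring_nf

/-- The `m`-th term of the power series of `besselI ν` at `x`. -/
noncomputable def besselITerm (ν x : ℝ) (m : ℕ) : ℝ :=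
  (x / 2) ^ (2 * (m : ℝ) + ν) / ((m.factorial : ℝ) * Gamma ((m : ℝ) + ν + 1))

lemma besselITerm_nonneg (hν : 0 ≤ ν) {x : ℝ} (hx : 0 ≤ x) (m : ℕ) : 0 ≤ besselITerm ν x m := by
  unfold besselITerm
  positivity

lemma besselITerm_le (hν : 0 ≤ ν) {x : ℝ} (hx : 0 ≤ x) (m : ℕ) :
    besselITerm ν x m
      ≤ (x / 2) ^ ν / Gamma (ν + 1) * exp (x / 2) * ((x / 2) ^ m / m.factorial) := by
  have hpow : (x / 2) ^ (2 * (m : ℝ) + ν) = (x / 2) ^ m * (x / 2) ^ m * (x / 2) ^ ν := by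
    rw [rpow_add_of_nonneg (by positivity) (by positivity) hν, two_mul,
      rpow_add_of_nonneg (by positivity) (by positivity) (by positivity), rpow_natCast]
  calc besselITerm ν x m
      ≤ (x / 2) ^ (2 * (m : ℝ) + ν) / (m.factorial * (m.factorial * Gamma (ν + 1))) := by
        unfold besselITerm
        gcongr
        exact factorial_mul_Gamma_le_Gamma hν m
    _ = (x / 2) ^ ν / Gamma (ν + 1) * ((x / 2) ^ m / m.factorial)
          * ((x / 2) ^ m / m.factorial) := by
        rw [hpow]
        field_simp
    _ ≤ (x / 2) ^ ν / Gamma (ν + 1) * exp (x / 2) * ((x / 2) ^ m / m.factorial) := by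
        gcongr
        exact pow_div_factorial_le_exp _ (by positivity) m

lemma summable_besselITerm (hν : 0 ≤ ν) {x : ℝ} (hx : 0 ≤ x) : Summable (besselITerm ν x) :=
  .of_nonneg_of_le (besselITerm_nonneg hν hx) (besselITerm_le hν hx)
    ((summable_pow_div_factorial _).mul_left _)

lemma besselI_le (hν : 0 ≤ ν) {x : ℝ} (hx : 0 ≤ x) :
    besselI ν x ≤ (x / 2) ^ ν / Gamma (ν + 1) * exp x := by
  have hexp : ∑' m : ℕ, (x / 2) ^ m / (m.factorial : ℝ) = exp (x / 2) := by
    rw [exp_eq_exp_ℝ, NormedSpace.exp_eq_tsum_div]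
  calc besselI ν x
      ≤ ∑' m : ℕ, (x / 2) ^ ν / Gamma (ν + 1) * exp (x / 2) * ((x / 2) ^ m / m.factorial) :=
        (summable_besselITerm hν hx).tsum_le_tsum (besselITerm_le hν hx)
          ((summable_pow_div_factorial _).mul_left _)
    _ = (x / 2) ^ ν / Gamma (ν + 1) * exp x := by
        rw [tsum_mul_left, hexp, mul_assoc, ← exp_add, add_halves]

lemma le_besselI (hν : 0 ≤ ν) {x : ℝ} (hx : 0 ≤ x) :
    (x / 2) ^ ν / Gamma (ν + 1) ≤ besselI ν x := by
  calc (x / 2) ^ ν / Gamma (ν + 1) = besselITerm ν x 0 := by simp [besselITerm]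
    _ ≤ besselI ν x :=
        (summable_besselITerm hν hx).le_tsum 0 fun m _ => besselITerm_nonneg hν hx m

lemma besselI_nonneg (hν : 0 ≤ ν) {x : ℝ} (hx : 0 ≤ x) : 0 ≤ besselI ν x :=
  tsum_nonneg (besselITerm_nonneg hν hx)

lemma monotoneOn_besselI (hν : 0 ≤ ν) : MonotoneOn (besselI ν) (Ici 0) := by
  intro x (hx : 0 ≤ x) y (hy : 0 ≤ y) hxy
  refine (summable_besselITerm hν hx).tsum_le_tsum (fun m => ?_) (summable_besselITerm hν hy)
  change besselITerm ν x m ≤ besselITerm ν y m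
  unfold besselITerm
  gcongr

lemma tendsto_besselI_div_rpow (hν : 0 ≤ ν) :
    Tendsto (fun x => besselI ν x / (x / 2) ^ ν) (𝓝[>] 0) (𝓝 (Gamma (ν + 1))⁻¹) := by
  have hupper : Tendsto (fun x => (Gamma (ν + 1))⁻¹ * exp x) (𝓝[>] 0) (𝓝 (Gamma (ν + 1))⁻¹) := by
    have : ContinuousAt (fun x => (Gamma (ν + 1))⁻¹ * exp x) 0 := by fun_prop
    simpa using this.tendsto.mono_left nhdsWithin_le_nhds
  refine tendsto_of_tendsto_of_tendsto_of_le_of_le' tendsto_const_nhds hupper ?_ ?_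
  · filter_upwards [self_mem_nhdsWithin] with x (hx : 0 < x)
    rw [le_div_iff₀ (by positivity), ← div_eq_inv_mul]
    exact le_besselI hν hx.le
  · filter_upwards [self_mem_nhdsWithin] with x (hx : 0 < x)
    rw [div_le_iff₀ (by positivity)]
    exact (besselI_le hν hx.le).trans_eq (by ring)

end BesselI

section BesselKernel

/-- The transition density of the Bessel process of index `ν` from `x₀` to `x` at time `s`, with
its power-law prefactors divided out so that it has a finite positive limit as `x → 0⁺`. -/
noncomputable def besselKernel (ν s x₀ x : ℝ) : ℝ :=
  exp (-(x ^ 2 + x₀ ^ 2) / (2 * s)) * (besselI ν (x₀ * x / s) / (x₀ * x / s / 2) ^ ν)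

variable {ν s x₀ : ℝ}

lemma besselKernel_nonneg (hν : 0 ≤ ν) (hs : 0 ≤ s) (hx₀ : 0 ≤ x₀) {x : ℝ} (hx : 0 ≤ x) :
    0 ≤ besselKernel ν s x₀ x := by
  have := besselI_nonneg hν (x := x₀ * x / s) (by positivity)
  unfold besselKernel
  positivity

lemma besselKernel_le (hν : 0 ≤ ν) (hs : 0 < s) (hx₀ : 0 < x₀) {x : ℝ} (hx : 0 < x) :
    besselKernel ν s x₀ x ≤ (Gamma (ν + 1))⁻¹ := by
  have hexponent : -(x ^ 2 + x₀ ^ 2) / (2 * s) + x₀ * x / s = -((x - x₀) ^ 2 / (2 * s)) := by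
    field_simp
    ring
  calc besselKernel ν s x₀ x
      ≤ exp (-(x ^ 2 + x₀ ^ 2) / (2 * s)) * ((Gamma (ν + 1))⁻¹ * exp (x₀ * x / s)) := by
        unfold besselKernel
        gcongr
        rw [div_le_iff₀ (by positivity)]
        exact (besselI_le hν (by positivity)).trans_eq (by ring)
    _ = (Gamma (ν + 1))⁻¹ * exp (-((x - x₀) ^ 2 / (2 * s))) := by
        rw [mul_left_comm, ← exp_add, hexponent]
    _ ≤ (Gamma (ν + 1))⁻¹ :=
        mul_le_of_le_one_right (by positivity)
          (exp_le_one_iff.2 (neg_nonpos.2 (by positivity)))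

lemma tendsto_besselKernel (hν : 0 ≤ ν) (hs : 0 < s) (hx₀ : 0 < x₀) :
    Tendsto (besselKernel ν s x₀) (𝓝[>] 0)
      (𝓝 (exp (-x₀ ^ 2 / (2 * s)) * (Gamma (ν + 1))⁻¹)) := by
  have hexp : Tendsto (fun x => exp (-(x ^ 2 + x₀ ^ 2) / (2 * s))) (𝓝[>] 0)
      (𝓝 (exp (-x₀ ^ 2 / (2 * s)))) := by
    have : ContinuousAt (fun x => exp (-(x ^ 2 + x₀ ^ 2) / (2 * s))) 0 := by fun_prop
    simpa using this.tendsto.mono_left nhdsWithin_le_nhds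
  have harg : Tendsto (fun x => x₀ * x / s) (𝓝[>] 0) (𝓝[>] 0) := by
    refine tendsto_nhdsWithin_iff.2 ⟨?_, ?_⟩
    · have : ContinuousAt (fun x => x₀ * x / s) 0 := by fun_prop
      simpa using this.tendsto.mono_left nhdsWithin_le_nhds
    · filter_upwards [self_mem_nhdsWithin] with x (hx : 0 < x)
      exact div_pos (mul_pos hx₀ hx) hs
  exact hexp.mul ((tendsto_besselI_div_rpow hν).comp harg)

end BesselKernel

section CEVDensity

/-- The density at `z` of the time-`t` marginal of the CEV process with volatility `ξ`, exponent `p`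
and starting point `y₀`, in the regime `p > 1`. -/
noncomputable def cevDensity (t ξ y₀ p z : ℝ) : ℝ :=
  √y₀ * z ^ ((1 : ℝ) / 2 - 2 * p) / ((p - 1) * ξ ^ 2 * t)
    * exp (-(z ^ (2 * (1 - p)) + y₀ ^ (2 * (1 - p))) / (2 * ξ ^ 2 * t * (1 - p) ^ 2))
    * besselI (1 / (2 * (p - 1))) ((y₀ * z) ^ (1 - p) / ((1 - p) ^ 2 * ξ ^ 2 * t))

/-- The constant relating `z ^ (2 * p) * cevDensity t ξ y₀ p z` to the Bessel kernel. -/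
noncomputable def cevConst (t ξ y₀ p : ℝ) : ℝ :=
  √y₀ / ((p - 1) * ξ ^ 2 * t)
    * (y₀ ^ (1 - p) / ((1 - p) ^ 2 * ξ ^ 2 * t) / 2) ^ (1 / (2 * (p - 1)))

variable {t ξ y₀ p : ℝ}

lemma cevConst_pos (ht : 0 < t) (hξ : 0 < ξ) (hy₀ : 0 < y₀) (hp : 1 < p) :
    0 < cevConst t ξ y₀ p := by
  have : 0 < p - 1 := sub_pos.2 hp
  have : 1 - p ≠ 0 := by linarith
  unfold cevConst
  positivity

-- `z ↦ z ^ (1 - p)` turns the CEV process into a Bessel process of index `1 / (2 * (p - 1))`.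
lemma cevDensity_eq (ht : 0 < t) (hξ : 0 < ξ) (hy₀ : 0 < y₀) (hp : 1 < p) {z : ℝ} (hz : 0 < z) :
    cevDensity t ξ y₀ p z = cevConst t ξ y₀ p * z ^ (-(2 * p)) *
      besselKernel (1 / (2 * (p - 1))) ((1 - p) ^ 2 * ξ ^ 2 * t) (y₀ ^ (1 - p)) (z ^ (1 - p)) := by
  have hp0 : 0 < p - 1 := sub_pos.2 hp
  have hp1 : 1 - p ≠ 0 := by linarith
  have hsq {u : ℝ} (hu : 0 < u) : u ^ (2 * (1 - p)) = (u ^ (1 - p)) ^ 2 := by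
    rw [mul_comm, rpow_mul hu.le, rpow_two]
  have hpow : (z ^ (1 - p)) ^ (1 / (2 * (p - 1))) = z ^ (-(1 / 2) : ℝ) := by
    rw [← rpow_mul hz.le]
    congr 1
    field_simp
    ring
  have hsplit : z ^ (-(2 * p)) = z ^ ((1 : ℝ) / 2 - 2 * p) * z ^ (-(1 / 2) : ℝ) := by
    rw [← rpow_add hz]
    ring_nf
  have harg : (y₀ ^ (1 - p) * z ^ (1 - p) / ((1 - p) ^ 2 * ξ ^ 2 * t) / 2) ^ (1 / (2 * (p - 1)))
      = (y₀ ^ (1 - p) / ((1 - p) ^ 2 * ξ ^ 2 * t) / 2) ^ (1 / (2 * (p - 1)))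
        * z ^ (-(1 / 2) : ℝ) := by
    rw [mul_div_right_comm, mul_div_right_comm, mul_rpow (by positivity) (by positivity), hpow]
  have hscale : 2 * ξ ^ 2 * t * (1 - p) ^ 2 = 2 * ((1 - p) ^ 2 * ξ ^ 2 * t) := by ring
  rw [cevDensity, cevConst, besselKernel, hsq hz, hsq hy₀, mul_rpow hy₀.le hz.le, harg, hsplit,
    hscale]
  field_simp

lemma aestronglyMeasurable_cevDensity (ht : 0 ≤ t) (hy₀ : 0 < y₀) (hp : 1 < p) :
    AEStronglyMeasurable (cevDensity t ξ y₀ p) (volume.restrict (Ioi 0)) := by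
  have : 0 < p - 1 := sub_pos.2 hp
  have harg : AntitoneOn (fun z => (y₀ * z) ^ (1 - p) / ((1 - p) ^ 2 * ξ ^ 2 * t)) (Ioi 0) := by
    intro z (hz : 0 < z) z' _ hzz'
    beta_reduce
    gcongr ?_ / _
    exact rpow_le_rpow_of_nonpos (by positivity) (by gcongr) (by linarith)
  have hbessel : AntitoneOn (fun z => besselI (1 / (2 * (p - 1)))
      ((y₀ * z) ^ (1 - p) / ((1 - p) ^ 2 * ξ ^ 2 * t))) (Ioi 0) :=
    (monotoneOn_besselI (by positivity)).comp_AntitoneOn harg fun z (hz : 0 < z) =>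
      mem_Ici.2 (by positivity)
  have hprefactor : Measurable fun z => √y₀ * z ^ ((1 : ℝ) / 2 - 2 * p) / ((p - 1) * ξ ^ 2 * t)
      * exp (-(z ^ (2 * (1 - p)) + y₀ ^ (2 * (1 - p))) / (2 * ξ ^ 2 * t * (1 - p) ^ 2)) := by
    fun_prop
  exact (hprefactor.aemeasurable.mul
    (aemeasurable_restrict_of_antitoneOn measurableSet_Ioi hbessel)).aestronglyMeasurable

lemma abs_cevDensity_le (ht : 0 < t) (hξ : 0 < ξ) (hy₀ : 0 < y₀) (hp : 1 < p) {z : ℝ}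
    (hz : 0 < z) :
    |cevDensity t ξ y₀ p z|
      ≤ cevConst t ξ y₀ p * (Gamma (1 / (2 * (p - 1)) + 1))⁻¹ * z ^ (-(2 * p)) := by
  have : 0 < p - 1 := sub_pos.2 hp
  have : 1 - p ≠ 0 := by linarith
  have hconst := cevConst_pos ht hξ hy₀ hp
  have hkernel := besselKernel_nonneg (ν := 1 / (2 * (p - 1))) (s := (1 - p) ^ 2 * ξ ^ 2 * t)
    (x₀ := y₀ ^ (1 - p)) (x := z ^ (1 - p))
    (by positivity) (by positivity) (by positivity) (by positivity)
  rw [cevDensity_eq ht hξ hy₀ hp hz, abs_of_nonneg (by positivity), mul_right_comm]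
  gcongr
  exact besselKernel_le (by positivity) (by positivity) (by positivity) (by positivity)

lemma exists_tendsto_rpow_mul_cevDensity (ht : 0 < t) (hξ : 0 < ξ) (hy₀ : 0 < y₀) (hp : 1 < p) :
    ∃ D > 0, Tendsto (fun z => z ^ (2 * p) * cevDensity t ξ y₀ p z) atTop (𝓝 D) := by
  have hp0 : 0 < p - 1 := sub_pos.2 hp
  have hp1 : 1 - p ≠ 0 := by linarith
  have hconst := cevConst_pos ht hξ hy₀ hp
  have hkernel := tendsto_besselKernel (ν := 1 / (2 * (p - 1))) (s := (1 - p) ^ 2 * ξ ^ 2 * t)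
    (x₀ := y₀ ^ (1 - p)) (by positivity) (by positivity) (by positivity)
  have hpow : Tendsto (fun z : ℝ => z ^ (1 - p)) atTop (𝓝[>] 0) := by
    refine tendsto_nhdsWithin_iff.2 ⟨?_, ?_⟩
    · simpa using tendsto_rpow_neg_atTop hp0
    · filter_upwards [eventually_gt_atTop 0] with z hz
      exact rpow_pos_of_pos hz _
  refine ⟨_, by positivity, ((hkernel.comp hpow).const_mul (cevConst t ξ y₀ p)).congr' ?_⟩
  filter_upwards [eventually_gt_atTop 0] with z hz
  rw [cevDensity_eq ht hξ hy₀ hp hz, rpow_neg hz.le, Function.comp_apply]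
  field_simp

end CEVDensity

section PowerLawMixture

variable {k a K D : ℝ} {f : ℝ → ℝ}

lemma integrableOn_exp_neg_div_mul_rpow {q : ℝ} (hq : 0 < q) (ha : 1 < a) :
    IntegrableOn (fun u : ℝ => exp (-(q / u)) * u ^ (-a)) (Ioi 0) := by
  have hgamma : IntegrableOn (fun u : ℝ => u ^ (a - 2) * exp (-q * u ^ (1 : ℝ))) (Ioi 0) :=
    integrableOn_rpow_mul_exp_neg_mul_rpow (by linarith) one_pos hq
  refine ((integrableOn_Ioi_comp_rpow_iff' _ (neg_ne_zero.2 one_ne_zero)).2 hgamma).congr_fun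
    (fun u (hu : 0 < u) => ?_) measurableSet_Ioi
  have hpow : u ^ (-1 - 1 : ℝ) * (u ^ (-1 : ℝ)) ^ (a - 2) = u ^ (-a) := by
    rw [← rpow_mul hu.le, ← rpow_add hu]
    ring_nf
  beta_reduce
  rw [smul_eq_mul, ← mul_assoc, hpow, rpow_one, rpow_neg_one, neg_mul, ← div_eq_mul_inv, mul_comm]

lemma integrableOn_BS_mul_rpow (hk : 0 < k) (ha : 1 < a) :
    IntegrableOn (fun u : ℝ => BS k u 1 * u ^ (-a)) (Ioi 0) := by
  refine ((integrableOn_exp_neg_div_mul_rpow (q := k ^ 2 / 2) (by positivity) ha).const_mul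
    (exp (k / 2))).mono' (by have := measurable_BS k 1; fun_prop) ?_
  filter_upwards [ae_restrict_mem measurableSet_Ioi] with u (hu : 0 < u)
  have hBS : 0 < BS k u 1 := BS_pos (by simpa using hu)
  rw [norm_of_nonneg (by positivity), ← mul_assoc, ← exp_add, ← sub_eq_add_neg]
  gcongr
  simpa using BS_le_exp hk.le (w := u) (T := 1) (by simpa using hu)

lemma integral_BS_mul_rpow_pos (hk : 0 < k) (ha : 1 < a) :
    0 < ∫ u in Ioi (0 : ℝ), BS k u 1 * u ^ (-a) := by
  have hpos : ∀ u ∈ Ioi (0 : ℝ), 0 < BS k u 1 * u ^ (-a) := fun u (hu : 0 < u) =>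
    mul_pos (BS_pos (by simpa using hu)) (rpow_pos_of_pos hu _)
  refine (setIntegral_pos_iff_support_of_nonneg_ae ?_ (integrableOn_BS_mul_rpow hk ha)).2 ?_
  · filter_upwards [ae_restrict_mem measurableSet_Ioi] with u hu using (hpos u hu).le
  · have hsupport : Ioi 0 ⊆ Function.support fun u => BS k u 1 * u ^ (-a) :=
      fun u hu => (hpos u hu).ne'
    rw [inter_eq_right.2 hsupport]
    simp

lemma integral_BS_mul_eq_integral_comp_div (k : ℝ) (f : ℝ → ℝ) {τ : ℝ} (hτ : 0 < τ) :
    ∫ y in Ioi (0 : ℝ), BS k y τ * f y = τ⁻¹ * ∫ u in Ioi (0 : ℝ), BS k u 1 * f (u / τ) := by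
  have h := integral_comp_mul_left_Ioi (fun u => BS k u 1 * f (u / τ)) 0 hτ
  rw [mul_zero, smul_eq_mul] at h
  rw [← h]
  congr 1 with y
  rw [BS_eq_BS_mul_one, mul_comm, mul_div_cancel_left₀ _ hτ.ne', mul_comm y]
  ring

lemma quasiMeasurePreserving_div_const_restrict_Ioi {τ : ℝ} (hτ : 0 < τ) :
    Measure.QuasiMeasurePreserving (fun u : ℝ => u / τ) (volume.restrict (Ioi 0))
      (volume.restrict (Ioi 0)) := by
  have hquasi : Measure.QuasiMeasurePreserving (fun u : ℝ => u / τ) := by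
    refine ⟨by fun_prop, ?_⟩
    simp only [div_eq_mul_inv, map_volume_mul_right (inv_ne_zero hτ.ne')]
    exact Measure.smul_absolutelyContinuous
  exact hquasi.restrict fun u (hu : 0 < u) => div_pos hu hτ

theorem tendsto_integral_BS_mul_div_rpow (hk : 0 < k) (ha : 1 < a)
    (hf : AEStronglyMeasurable f (volume.restrict (Ioi 0)))
    (hbound : ∀ y > 0, |f y| ≤ K * y ^ (-a))
    (htail : Tendsto (fun y => y ^ a * f y) atTop (𝓝 D)) :
    Tendsto (fun τ => (∫ y in Ioi (0 : ℝ), BS k y τ * f y) / τ ^ (a - 1)) (𝓝[>] 0)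
      (𝓝 (D * ∫ u in Ioi (0 : ℝ), BS k u 1 * u ^ (-a))) := by
  rw [← integral_const_mul]
  have hrescaled : Tendsto (fun τ => ∫ u in Ioi (0 : ℝ), BS k u 1 * (τ ^ (-a) * f (u / τ))) (𝓝[>] 0)
      (𝓝 (∫ u in Ioi (0 : ℝ), D * (BS k u 1 * u ^ (-a)))) := by
    refine tendsto_integral_filter_of_dominated_convergence
      (fun u => K * (BS k u 1 * u ^ (-a))) ?_ ?_ ((integrableOn_BS_mul_rpow hk ha).const_mul K) ?_
    · filter_upwards [self_mem_nhdsWithin] with τ hτ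
      exact (measurable_BS k 1).aestronglyMeasurable.mul <|
        (hf.comp_quasiMeasurePreserving
          (quasiMeasurePreserving_div_const_restrict_Ioi hτ)).const_mul _
    · filter_upwards [self_mem_nhdsWithin] with τ (hτ : 0 < τ)
      filter_upwards [ae_restrict_mem measurableSet_Ioi] with u (hu : 0 < u)
      have hBS : 0 < BS k u 1 := BS_pos (by simpa using hu)
      rw [norm_mul, norm_mul, norm_of_nonneg hBS.le, norm_of_nonneg (by positivity),
        mul_left_comm K]
      refine mul_le_mul_of_nonneg_left ?_ hBS.le
      calc τ ^ (-a) * ‖f (u / τ)‖ ≤ τ ^ (-a) * (K * (u / τ) ^ (-a)) := by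
            gcongr
            exact hbound _ (by positivity)
        _ = K * u ^ (-a) := by
            rw [div_rpow hu.le hτ.le]
            field_simp
    · filter_upwards [ae_restrict_mem measurableSet_Ioi] with u (hu : 0 < u)
      have hdiv : Tendsto (fun τ => u / τ) (𝓝[>] 0) atTop := by
        simpa [div_eq_mul_inv] using tendsto_inv_nhdsGT_zero.const_mul_atTop hu
      refine ((htail.comp hdiv).mul_const (BS k u 1 * u ^ (-a))).congr' ?_
      filter_upwards [self_mem_nhdsWithin] with τ (hτ : 0 < τ)
      rw [Function.comp_apply, div_rpow hu.le hτ.le, rpow_neg hu.le, rpow_neg hτ.le]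
      field_simp
  refine hrescaled.congr' ?_
  filter_upwards [self_mem_nhdsWithin] with τ (hτ : 0 < τ)
  simp_rw [mul_left_comm (BS k _ 1)]
  rw [integral_const_mul, integral_BS_mul_eq_integral_comp_div k f hτ, rpow_neg hτ.le,
    rpow_sub_one hτ.ne']
  field_simp

end PowerLawMixture

section ImpliedVolatility

lemma tendsto_log_div_log_of_tendsto_div_rpow {g : ℝ → ℝ} {b c : ℝ} (hc : 0 < c)
    (hg : Tendsto (fun τ => g τ / τ ^ b) (𝓝[>] 0) (𝓝 c)) :
    Tendsto (fun τ => log (g τ) / log τ) (𝓝[>] 0) (𝓝 b) := by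
  have hratio : Tendsto (fun τ => log (g τ / τ ^ b) / log τ) (𝓝[>] 0) (𝓝 0) :=
    (hg.log hc.ne').div_atBot tendsto_log_nhdsGT_zero
  have hadd := hratio.add_const b
  rw [zero_add] at hadd
  refine hadd.congr' ?_
  filter_upwards [self_mem_nhdsWithin, hg.eventually_const_lt hc,
    tendsto_log_nhdsGT_zero.eventually_lt_atBot 0] with τ (hτ : 0 < τ) hgτ hlog
  have hg0 : g τ ≠ 0 := fun h => by simp [h] at hgτ
  rw [log_div hg0 (rpow_pos_of_pos hτ b).ne', log_rpow hτ]
  field_simp [hlog.ne]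
  ring

lemma tendsto_zero_of_tendsto_div_rpow {g : ℝ → ℝ} {b c : ℝ} (hb : 0 < b)
    (hg : Tendsto (fun τ => g τ / τ ^ b) (𝓝[>] 0) (𝓝 c)) : Tendsto g (𝓝[>] 0) (𝓝 0) := by
  have hpow : Tendsto (fun τ : ℝ => τ ^ b) (𝓝[>] 0) (𝓝 0) := by
    have := (continuousAt_rpow_const 0 b (Or.inr hb.le)).tendsto.mono_left
      (nhdsWithin_le_nhds (s := Ioi 0))
    rwa [zero_rpow hb.ne'] at this
  have hmul := hg.mul hpow
  rw [mul_zero] at hmul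
  refine hmul.congr' ?_
  filter_upwards [self_mem_nhdsWithin] with τ (hτ : 0 < τ)
  exact div_mul_cancel₀ _ (rpow_pos_of_pos hτ b).ne'

theorem tendsto_impliedVariance_of_tendsto_price_div_rpow {k b c : ℝ} {C w : ℝ → ℝ} (hk : 0 < k)
    (hb : 0 < b) (hc : 0 < c) (hC : Tendsto (fun τ => C τ / τ ^ b) (𝓝[>] 0) (𝓝 c))
    (hw : ∀ᶠ τ in 𝓝[>] 0, 0 < w τ) (hBS : ∀ᶠ τ in 𝓝[>] 0, BS k (w τ) τ = C τ) :
    Tendsto (fun τ => w τ * (2 * b) * τ * |log τ| / k ^ 2) (𝓝[>] 0) (𝓝 1) := by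
  have hpos : ∀ᶠ τ in 𝓝[>] 0, 0 < w τ * τ := by
    filter_upwards [hw, self_mem_nhdsWithin] with τ hwτ hτ using mul_pos hwτ hτ
  have hBS_div : Tendsto (fun τ => BS k (w τ) τ / τ ^ b) (𝓝[>] 0) (𝓝 c) :=
    hC.congr' (hBS.mono fun τ h => by simp only [h])
  have hvar := tendsto_totalVariance_zero_of_tendsto_BS_zero hpos
    (tendsto_zero_of_tendsto_div_rpow hb hBS_div)
  have hlogBS := tendsto_totalVariance_mul_neg_log_BS hk.le hpos hvar
  have hlogratio := tendsto_log_div_log_of_tendsto_div_rpow hc hBS_div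
  have hlim := ((hlogBS.div hlogratio hb.ne').mul_const (2 * b / k ^ 2)).congr' (f₂ := fun τ =>
    w τ * (2 * b) * τ * |log τ| / k ^ 2) ?_
  · convert hlim using 2
    field_simp
  · filter_upwards [tendsto_log_nhdsGT_zero.eventually_lt_atBot 0,
      hlogratio.eventually_const_lt hb] with τ hlogτ hratio
    have hlog_ne : log (BS k (w τ) τ) ≠ 0 := fun h => by simp [h] at hratio
    rw [abs_of_neg hlogτ]
    simp only [Pi.div_apply]
    field_simp

end ImpliedVolatility

theorem stmt_14 (t ξ y0 p : ℝ) (ht : 0 < t) (hξ : 0 < ξ) (hy0 : 0 < y0) (hp : 1 < p)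
    (k : ℝ) (hk : 0 < k) :
    let η : ℝ := 1 / (2 * (p - 1))
    -- the CEV density (case `p > 1`)
    let ζ : ℝ → ℝ := fun z =>
      Real.sqrt y0 * z ^ ((1 : ℝ) / 2 - 2 * p) / ((p - 1) * ξ ^ 2 * t)
        * Real.exp (-(z ^ (2 * (1 - p)) + y0 ^ (2 * (1 - p))) / (2 * ξ ^ 2 * t * (1 - p) ^ 2))
        * besselI η ((y0 * z) ^ (1 - p) / ((1 - p) ^ 2 * ξ ^ 2 * t))
    -- the call price
    let C : ℝ → ℝ := fun τ => ∫ y in Set.Ioi (0 : ℝ), BS k y τ * ζ y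
    ∀ τ₀ > (0 : ℝ), ∀ σ : ℝ → ℝ,
      (∀ τ ∈ Set.Ioo (0 : ℝ) τ₀, 0 < σ τ ∧ BS k (σ τ ^ 2) τ = C τ) →
      Filter.Tendsto (fun τ => σ τ ^ 2 * (2 * (2 * p - 1)) * τ * |Real.log τ| / k ^ 2)
        (nhdsWithin 0 (Set.Ioi 0)) (nhds 1) := by
  intro η ζ C τ₀ hτ₀ σ hσ
  obtain ⟨D, hD, htail⟩ := exists_tendsto_rpow_mul_cevDensity ht hξ hy0 hp
  have hprice : Tendsto (fun τ => C τ / τ ^ (2 * p - 1)) (𝓝[>] 0)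
      (𝓝 (D * ∫ u in Ioi (0 : ℝ), BS k u 1 * u ^ (-(2 * p)))) :=
    tendsto_integral_BS_mul_div_rpow hk (by linarith)
      (aestronglyMeasurable_cevDensity ht.le hy0 hp)
      (fun _ hy => abs_cevDensity_le ht hξ hy0 hp hy) htail
  have hsmall : ∀ᶠ τ in 𝓝[>] (0 : ℝ), τ ∈ Ioo 0 τ₀ := Ioo_mem_nhdsGT hτ₀
  exact tendsto_impliedVariance_of_tendsto_price_div_rpow hk (by linarith)
    (mul_pos hD (integral_BS_mul_rpow_pos hk (by linarith))) hprice
    (hsmall.mono fun τ hτ => sq_pos_of_pos (hσ τ hτ).1) (hsmall.mono fun τ hτ => (hσ τ hτ).2)
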